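/- Let d ≥ 1 and let φ : ℕ → (0,∞) be a positive increasing function with ∑_{n=1}^∞ 1/φ(n) < ∞. For Lebesgue-almost every α = (α₁,…,α_d) ∈ [0,1]^d there is a constant c(α,φ) > 0 such that for every integer n with |n| > 1: (i) |n|·∏_{i=1}^d ‖nα_i‖ ≥ c(α,φ) / [ (log |n|)^d · φ(⌈log log |n|⌉) ], and (ii) ‖nα_i‖ ≥ c(α,φ) / ( |n|·φ(⌈log |n|⌉) ) for every 1 ≤ i ≤ d. -/

import Mathlib

open MeasureTheory Finset

noncomputable section

/-- Distance from `y` to the nearest integer. -/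
def nid (y : ℝ) : ℝ := |y - round y|

open scoped ENNReal

lemma nid_eq_norm (y : ℝ) : nid y = ‖(y : UnitAddCircle)‖ := UnitAddCircle.norm_eq.symm

lemma nid_nonneg (y : ℝ) : 0 ≤ nid y := abs_nonneg _

lemma nid_neg (y : ℝ) : nid (-y) = nid y := by
  simp [nid_eq_norm]

lemma measurable_nid : Measurable nid := by
  have : nid = fun y : ℝ => ‖(y : UnitAddCircle)‖ := funext nid_eq_norm
  rw [this]
  exact measurable_norm.comp AddCircle.measurable_mk'

lemma measurePreserving_natCast_mul {n : ℕ} (hn : n ≠ 0) :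
    MeasurePreserving (fun x : ℝ => (((n : ℝ) * x : ℝ) : UnitAddCircle))
      (volume.restrict (Set.Icc (0 : ℝ) 1)) volume := by
  have h1 := UnitAddCircle.measurePreserving_mk 0
  rw [zero_add, restrict_Ioc_eq_restrict_Icc] at h1
  have h2 := Measure.measurePreserving_zsmul (volume : Measure UnitAddCircle) (n := (n : ℤ))
    (by exact_mod_cast hn)
  convert h2.comp h1 using 1
  ext x
  simp

lemma measure_nid_mul_lt {n : ℕ} (hn : n ≠ 0) (t : ℝ≥0∞) :
    volume.restrict (Set.Icc (0 : ℝ) 1) {x | ENNReal.ofReal (nid (n * x)) < t} ≤ 2 * t := by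
  rcases eq_or_ne t ∞ with rfl | ht
  · simp
  lift t to NNReal using ht
  have h := (measurePreserving_natCast_mul hn).measure_preimage
    (s := Metric.closedBall (0 : UnitAddCircle) t)
    Metric.isClosed_closedBall.measurableSet.nullMeasurableSet
  rw [AddCircle.volume_closedBall] at h
  calc _ ≤ _ := measure_mono ?_
    _ = _ := h
    _ ≤ ENNReal.ofReal (2 * t) := ENNReal.ofReal_le_ofReal (min_le_right _ _)
    _ = _ := by rw [ENNReal.ofReal_mul (by norm_num)]; simp
  intro x hx
  rw [Set.mem_ofPred_eq, ENNReal.ofReal_lt_coe_iff (nid_nonneg _), nid_eq_norm] at hx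
  simpa using hx.le

lemma lintegral_nid_mul_rpow_neg_le {n : ℕ} (hn : n ≠ 0) {s : ℝ} (hs1 : s < 1) :
    ∫⁻ x in Set.Icc (0 : ℝ) 1, ENNReal.ofReal (nid (n * x)) ^ (-s) ≤
      ENNReal.ofReal (2 / (1 - s)) := by
  have h1 : ∫⁻ x in Set.Icc (0 : ℝ) 1, ENNReal.ofReal (nid (n * x)) ^ (-s) =
      ∫⁻ y : UnitAddCircle, ENNReal.ofReal ‖y‖ ^ (-s) := by
    rw [← (measurePreserving_natCast_mul hn).lintegral_comp (by fun_prop)]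
    simp only [nid_eq_norm]
  have h2 : ∫⁻ x in Set.Ioc (-(1 / 2) : ℝ) (1 / 2), ENNReal.ofReal |x| ^ (-s) =
      ∫⁻ y : UnitAddCircle, ENNReal.ofReal ‖y‖ ^ (-s) := by
    rw [← UnitAddCircle.lintegral_preimage (-(1 / 2))]
    rw [show (-(1 / 2) + 1 : ℝ) = 1 / 2 by norm_num]
    refine setLIntegral_congr_fun measurableSet_Ioc fun x hx => ?_
    have : ‖(x : UnitAddCircle)‖ = |x| := by
      rw [AddCircle.norm_coe_eq_abs_iff _ one_ne_zero, abs_one, abs_le]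
      exact ⟨hx.1.le, hx.2⟩
    simp only [this]
  have h3 : ∫⁻ x in Set.Ioc (0 : ℝ) (1 / 2), ENNReal.ofReal |x| ^ (-s) ≤
      ENNReal.ofReal (1 / (1 - s)) := by
    have hi : IntervalIntegrable (fun x : ℝ => x ^ (-s)) volume 0 (1 / 2) :=
      intervalIntegral.intervalIntegrable_rpow' (by linarith)
    have hval := integral_rpow (a := 0) (b := 1 / 2) (r := -s) (Or.inl (by linarith))
    rw [intervalIntegrable_iff_integrableOn_Ioc_of_le (by norm_num)] at hi
    rw [intervalIntegral.integral_of_le (by norm_num)] at hval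
    have : ∫⁻ x in Set.Ioc (0 : ℝ) (1 / 2), ENNReal.ofReal |x| ^ (-s) =
        ∫⁻ x in Set.Ioc (0 : ℝ) (1 / 2), ENNReal.ofReal (x ^ (-s)) := by
      refine setLIntegral_congr_fun measurableSet_Ioc fun x hx => ?_
      rw [abs_of_pos hx.1, ENNReal.ofReal_rpow_of_pos hx.1]
    rw [this, ← ofReal_integral_eq_lintegral_ofReal hi, hval]
    · apply ENNReal.ofReal_le_ofReal
      rw [Real.zero_rpow (by linarith), sub_zero, neg_add_eq_sub]
      have : (0 : ℝ) < 1 - s := by linarith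
      gcongr
      exact Real.rpow_le_one (by norm_num) (by norm_num) this.le
    · filter_upwards [ae_restrict_mem measurableSet_Ioc] with x hx
      exact Real.rpow_nonneg hx.1.le _
  have h4 : ∫⁻ x in Set.Ioc (-(1 / 2) : ℝ) 0, ENNReal.ofReal |x| ^ (-s) =
      ∫⁻ x in Set.Ioc (0 : ℝ) (1 / 2), ENNReal.ofReal |x| ^ (-s) := by
    have hm := (Measure.measurePreserving_neg (volume : Measure ℝ)).setLIntegral_comp_preimage
      (s := Set.Ico (0 : ℝ) (1 / 2)) measurableSet_Ico
      (f := fun x => ENNReal.ofReal |x| ^ (-s)) (by fun_prop)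
    simpa [Measure.restrict_congr_set (Ico_ae_eq_Ioc (α := ℝ) (μ := volume))] using hm
  rw [h1, ← h2, ← Set.Ioc_union_Ioc_eq_Ioc (b := 0) (by norm_num) (by norm_num)]
  refine (lintegral_union_le _ _ _).trans ?_
  rw [h4, ← two_mul]
  calc 2 * _ ≤ 2 * ENNReal.ofReal (1 / (1 - s)) := by gcongr
    _ = _ := by
      rw [show (2 : ℝ≥0∞) = ENNReal.ofReal 2 by simp, ← ENNReal.ofReal_mul (by norm_num)]
      congr 1; ring

section Product

variable {Ω : Type*} [MeasurableSpace Ω] {ν : Measure Ω} [IsProbabilityMeasure ν]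

lemma lintegral_pi_prod {m : ℕ} {f : Ω → ℝ≥0∞} (hf : Measurable f) :
    ∫⁻ y, ∏ i : Fin m, f (y i) ∂(Measure.pi fun _ : Fin m => ν) = (∫⁻ x, f x ∂ν) ^ m := by
  have hind : ProbabilityTheory.iIndepFun (fun (i : Fin m) (y : Fin m → Ω) => f (y i))
      (Measure.pi fun _ : Fin m => ν) :=
    ProbabilityTheory.iIndepFun_pi (fun _ => hf.aemeasurable)
  rw [ProbabilityTheory.lintegral_prod_eq_prod_lintegral_of_indepFun _ _ hind
    (fun i => by fun_prop)]
  have (i : Fin m) : ∫⁻ y, f (y i) ∂(Measure.pi fun _ : Fin m => ν) = ∫⁻ x, f x ∂ν :=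
    (measurePreserving_eval (fun _ : Fin m => ν) i).lintegral_comp hf
  simp [this]

/-- If `ν {X < t} ≤ 2 t` and `∫ X ^ (-s) ≤ K`, the product of `m + 1` independent copies of `X` is
below `ε` with probability at most `(2 ε) ^ s * K ^ m`. -/
lemma measure_prod_lt_le {m : ℕ} {X : Ω → ℝ≥0∞} (hX : Measurable X) (hXtop : ∀ x, X x ≠ ∞)
    (htail : ∀ t, ν {x | X x < t} ≤ 2 * t) {s : ℝ} (hs0 : 0 < s) (hs1 : s < 1) {K : ℝ≥0∞}
    (hK : ∫⁻ x, X x ^ (-s) ∂ν ≤ K) {ε : ℝ≥0∞} (hε : ε ≠ 0) :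
    (Measure.pi fun _ : Fin (m + 1) => ν) {y | ∏ i, X (y i) < ε} ≤ (2 * ε) ^ s * K ^ m := by
  have hmp := (measurePreserving_piFinSuccAbove (fun _ : Fin (m + 1) => ν) 0).symm
  have hmeas : MeasurableSet {y : Fin (m + 1) → Ω | ∏ i, X (y i) < ε} :=
    measurableSet_lt (by fun_prop) measurable_const
  have hsec (y : Fin m → Ω) : ν {x | X x * ∏ i, X (y i) < ε} ≤
      (2 * ε) ^ s * ∏ i, X (y i) ^ (-s) := by
    rw [ENNReal.prod_rpow_of_ne_top (fun i _ => hXtop _)]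
    set P := ∏ i, X (y i)
    have hPtop : P ≠ ∞ := ENNReal.prod_ne_top fun i _ => hXtop _
    rcases eq_or_ne P 0 with hP | hP
    · rw [hP, ENNReal.zero_rpow_of_neg (by linarith), ENNReal.mul_top]
      · exact le_top
      · simp [hε, hs0, hs0.le]
    · have hset : {x | X x * P < ε} = {x | X x < ε / P} := by
        ext x
        simp [ENNReal.lt_div_iff_mul_lt (Or.inl hP) (Or.inl hPtop)]
      rw [hset, ENNReal.rpow_neg, ← ENNReal.inv_rpow, ← ENNReal.mul_rpow_of_nonneg _ _ hs0.le,
        mul_assoc, ← div_eq_mul_inv]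
      rcases le_total (2 * (ε / P)) 1 with h | h
      · exact (htail _).trans (by
          simpa using ENNReal.rpow_le_rpow_of_exponent_ge h hs1.le)
      · exact prob_le_one.trans (ENNReal.one_le_rpow h hs0)
  rw [← hmp.measure_preimage hmeas.nullMeasurableSet,
    Measure.prod_apply_symm (hmp.measurable hmeas)]
  calc _ ≤ ∫⁻ y, (2 * ε) ^ s * ∏ i, X (y i) ^ (-s) ∂(Measure.pi fun _ : Fin m => ν) := by
        refine lintegral_mono fun y => ?_
        convert hsec y using 2
        ext x
        simp [Fin.prod_univ_succ]
    _ = (2 * ε) ^ s * (∫⁻ x, X x ^ (-s) ∂ν) ^ m := by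
        rw [lintegral_const_mul _ (by fun_prop), lintegral_pi_prod (f := fun x => X x ^ (-s))]
        fun_prop
    _ ≤ _ := by gcongr

end Product

section Summability

lemma summable_comp_div_two {g : ℕ → ℝ} (hg : Summable g) : Summable fun k => g (k / 2) := by
  have h0 : HasSum (fun k => g (2 * k / 2)) (∑' k, g k) := by simpa using hg.hasSum
  have h1 : HasSum (fun k => g ((2 * k + 1) / 2)) (∑' k, g k) := by
    have (k : ℕ) : (2 * k + 1) / 2 = k := by lia
    simpa [this] using hg.hasSum
  exact (HasSum.even_add_odd (f := fun k => g (k / 2)) h0 h1).summable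

variable {φ : ℕ → ℝ}

lemma summable_one_div_mul_comp_log (hpos : ∀ n, 0 < φ n) (hmono : Monotone φ)
    (hsum : Summable fun n => 1 / φ n) :
    Summable fun n : ℕ => 1 / ((n : ℝ) * φ ⌈Real.log n⌉₊) := by
  rw [← summable_condensed_iff_of_nonneg]
  · refine (summable_comp_div_two hsum).of_nonneg_of_le (fun k => ?_) fun k => ?_
    · have := hpos ⌈Real.log ((2 ^ k : ℕ) : ℝ)⌉₊
      positivity
    · have hk : k / 2 ≤ ⌈Real.log ((2 ^ k : ℕ) : ℝ)⌉₊ := by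
        have h1 : ((k / 2 : ℕ) : ℝ) ≤ k / 2 := Nat.cast_div_le
        have h2 := Nat.le_ceil (Real.log ((2 ^ k : ℕ) : ℝ))
        push_cast at h2
        rw [Real.log_pow] at h2
        have h3 := Real.log_two_gt_d9
        have h4 : (0 : ℝ) ≤ k := k.cast_nonneg
        push_cast
        rw [Real.log_pow]
        have : ((k / 2 : ℕ) : ℝ) ≤ ⌈(k : ℝ) * Real.log 2⌉₊ := by nlinarith
        exact_mod_cast this
      have h5 := hpos (k / 2)
      have h6 := hpos ⌈Real.log ((2 ^ k : ℕ) : ℝ)⌉₊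
      calc _ = 1 / φ ⌈Real.log ((2 ^ k : ℕ) : ℝ)⌉₊ := by
            push_cast at h6 ⊢
            field_simp
        _ ≤ _ := one_div_le_one_div_of_le h5 (hmono hk)
  · intro n
    have := hpos ⌈Real.log n⌉₊
    positivity
  · intro m n hm hmn
    have h1 := hpos ⌈Real.log m⌉₊
    have h2 : (0 : ℝ) < m := by exact_mod_cast hm
    have h3 : φ ⌈Real.log m⌉₊ ≤ φ ⌈Real.log n⌉₊ := hmono (by gcongr)
    gcongr

/-- `max 1 (log n)`, a version of the logarithm bounded below by `1`. -/
def logMax (n : ℕ) : ℝ := max 1 (Real.log n)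

lemma one_le_logMax (n : ℕ) : 1 ≤ logMax n := le_max_left _ _

lemma logMax_pos (n : ℕ) : 0 < logMax n := one_pos.trans_le (one_le_logMax n)

lemma log_le_logMax (n : ℕ) : Real.log n ≤ logMax n := le_max_right _ _

lemma logMax_eq_log {n : ℕ} (hn : 3 ≤ n) : logMax n = Real.log n := by
  refine max_eq_right ?_
  rw [Real.le_log_iff_exp_le (by positivity)]
  have : (3 : ℝ) ≤ n := by exact_mod_cast hn
  linarith [Real.exp_one_lt_d9]

lemma logMax_mono {m n : ℕ} (hm : 0 < m) (hmn : m ≤ n) : logMax m ≤ logMax n := by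
  have : (0 : ℝ) < m := by exact_mod_cast hm
  unfold logMax
  gcongr

lemma summable_one_div_mul_logMax (hpos : ∀ n, 0 < φ n) (hmono : Monotone φ)
    (hsum : Summable fun n => 1 / φ n) :
    Summable fun n : ℕ => 1 / ((n : ℝ) * (logMax n * φ ⌈Real.log (logMax n)⌉₊)) := by
  have hshift : Summable fun n : ℕ => 1 / ((n : ℝ) * φ (⌈Real.log n⌉₊ - 1)) := by
    refine summable_one_div_mul_comp_log (φ := fun k => φ (k - 1)) (fun k => hpos _)
      (fun a b hab => hmono (by lia)) ?_
    rw [← summable_nat_add_iff 1]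
    simpa using hsum
  rw [← summable_condensed_iff_of_nonneg]
  · rw [← summable_nat_add_iff 1]
    refine ((summable_nat_add_iff 1).2 (hshift.mul_left 2)).of_nonneg_of_le
      (fun k => ?_) fun j => ?_
    · have := hpos ⌈Real.log (logMax (2 ^ (k + 1)))⌉₊
      have := logMax_pos (2 ^ (k + 1))
      positivity
    · have hk0 : (0 : ℝ) < (j + 1 : ℕ) := by positivity
      generalize j + 1 = k at *
      have hle : (k : ℝ) / 2 ≤ logMax (2 ^ k) := by
        refine le_trans ?_ (log_le_logMax _)
        push_cast
        rw [Real.log_pow]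
        nlinarith [Real.log_two_gt_d9]
      have hceil : ⌈Real.log k⌉₊ - 1 ≤ ⌈Real.log (logMax (2 ^ k))⌉₊ := by
        rw [Nat.sub_le_iff_le_add, Nat.ceil_le]
        have h1 := Real.log_le_log (by positivity) hle
        rw [Real.log_div hk0.ne' (by norm_num)] at h1
        have h2 := Nat.le_ceil (Real.log (logMax (2 ^ k)))
        push_cast
        linarith [Real.log_two_lt_d9]
      have h5 := hpos (⌈Real.log k⌉₊ - 1)
      have h6 := hpos ⌈Real.log (logMax (2 ^ k))⌉₊
      have h7 := logMax_pos (2 ^ k)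
      calc _ = 1 / (logMax (2 ^ k) * φ ⌈Real.log (logMax (2 ^ k))⌉₊) := by
            push_cast
            field_simp
        _ ≤ 1 / ((k : ℝ) / 2 * φ (⌈Real.log k⌉₊ - 1)) := by
            have := hmono hceil
            gcongr
        _ = _ := by field_simp
  · intro n
    have := hpos ⌈Real.log (logMax n)⌉₊
    have := logMax_pos n
    positivity
  · intro m n hm hmn
    have h1 := hpos ⌈Real.log (logMax m)⌉₊
    have h2 : (0 : ℝ) < m := by exact_mod_cast hm
    have h4 := logMax_mono hm hmn
    have h5 := logMax_pos m
    have h6 := logMax_pos n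
    have h3 : φ ⌈Real.log (logMax m)⌉₊ ≤ φ ⌈Real.log (logMax n)⌉₊ := hmono (by gcongr)
    gcongr

lemma summable_one_div_min_exp (hpos : ∀ n, 0 < φ n) (hsum : Summable fun n => 1 / φ n) :
    Summable fun n : ℕ => 1 / min (φ n) (Real.exp n) := by
  refine (hsum.add Real.summable_exp_neg_nat).of_nonneg_of_le (fun n => ?_) fun n => ?_
  · have := lt_min (hpos n) (Real.exp_pos n)
    positivity
  · have h1 := one_div_pos.2 (hpos n)
    have h2 := Real.exp_pos (-n)
    rcases min_choice (φ n) (Real.exp n) with h | h <;> rw [h]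
    · linarith
    · rw [one_div, ← Real.exp_neg]
      linarith

end Summability

/-- The uniform probability measure on the cube `[0, 1]^d`. -/
abbrev cubeMeasure (d : ℕ) : Measure (Fin d → ℝ) :=
  Measure.pi fun _ : Fin d => volume.restrict (Set.Icc (0 : ℝ) 1)

instance isProbabilityMeasure_restrict_unitInterval :
    IsProbabilityMeasure ((volume : Measure ℝ).restrict (Set.Icc 0 1)) :=
  ⟨by simp⟩

lemma cubeMeasure_prod_nid_lt_le {m n : ℕ} (hn : n ≠ 0) {ε L : ℝ} (hε : 0 < ε) (hL : 1 < L)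
    (hεL : -Real.log ε ≤ L) :
    cubeMeasure (m + 1) {α | ∏ i, nid (n * α i) < ε} ≤
      ENNReal.ofReal (2 * Real.exp 1 * ε * (2 * L) ^ m) := by
  have hL0 : 0 < L := one_pos.trans hL
  have hs1 : 1 - 1 / L < 1 := by simp [hL0]
  have hs0 : 0 < 1 - 1 / L := by
    rw [sub_pos, div_lt_one hL0]; exact hL
  have hmain := measure_prod_lt_le (ν := volume.restrict (Set.Icc (0 : ℝ) 1)) (m := m)
    (X := fun x => ENNReal.ofReal (nid (n * x)))
    ((measurable_nid.comp (measurable_const_mul _)).ennreal_ofReal) (by simp)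
    (measure_nid_mul_lt hn) hs0 hs1 (lintegral_nid_mul_rpow_neg_le hn hs1)
    (ε := ENNReal.ofReal ε) (by simpa using hε)
  have hset : {α : Fin (m + 1) → ℝ | ∏ i, nid (n * α i) < ε} =
      {α | ∏ i, ENNReal.ofReal (nid (n * α i)) < ENNReal.ofReal ε} := by
    ext α
    simp only [Set.mem_ofPred_eq]
    rw [← ENNReal.ofReal_prod_of_nonneg fun i _ => nid_nonneg _,
      ENNReal.ofReal_lt_ofReal_iff hε]
  have hpow : (2 * ε) ^ (1 - 1 / L) ≤ 2 * Real.exp 1 * ε := by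
    rw [Real.mul_rpow (by norm_num) hε.le]
    have h1 : (2 : ℝ) ^ (1 - 1 / L) ≤ 2 := by
      simpa using Real.rpow_le_rpow_of_exponent_le (one_le_two (α := ℝ)) hs1.le
    have h2 : ε ^ (1 - 1 / L) ≤ Real.exp 1 * ε := by
      have h3 : -Real.log ε / L ≤ 1 := (div_le_one hL0).2 hεL
      calc ε ^ (1 - 1 / L) = Real.exp (-Real.log ε / L + Real.log ε) := by
            rw [Real.rpow_def_of_pos hε]
            ring_nf
        _ ≤ Real.exp (1 + Real.log ε) := by gcongr
        _ = _ := by rw [Real.exp_add, Real.exp_log hε]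
    calc _ ≤ 2 * (Real.exp 1 * ε) := by gcongr
      _ = _ := by ring
  rw [hset]
  refine hmain.trans ?_
  rw [sub_sub_cancel, show (2 : ℝ≥0∞) = ENNReal.ofReal 2 by simp,
    ← ENNReal.ofReal_mul (by norm_num), ENNReal.ofReal_rpow_of_pos (by positivity),
    ← ENNReal.ofReal_pow (by positivity), ← ENNReal.ofReal_mul (by positivity)]
  apply ENNReal.ofReal_le_ofReal
  rw [div_div_eq_mul_div, div_one]
  gcongr

lemma ae_eventually_prod_nid_ge {m : ℕ} {φ : ℕ → ℝ} (hpos : ∀ n, 0 < φ n) (hmono : Monotone φ)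
    (hsum : Summable fun n => 1 / φ n) :
    ∀ᵐ α ∂(cubeMeasure (m + 1)), ∀ᶠ n : ℕ in Filter.atTop,
      1 / (Real.log n ^ (m + 1) * φ ⌈Real.log (Real.log n)⌉₊) ≤
        n * ∏ i, nid (n * α i) := by
  set ψ : ℕ → ℝ := fun k => min (φ k) (Real.exp k)
  have hψpos (k : ℕ) : 0 < ψ k := lt_min (hpos k) (Real.exp_pos k)
  have hψmono : Monotone ψ := hmono.min fun a b hab => by simpa using hab
  set ε : ℕ → ℝ := fun n => 1 / (n * (logMax n ^ (m + 1) * ψ ⌈Real.log (logMax n)⌉₊)) with hε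
  have hS := summable_one_div_mul_logMax hψpos hψmono (summable_one_div_min_exp hpos hsum)
  set C : ℝ := 2 * Real.exp 1 * (2 * (m + 4)) ^ m with hC
  have hbound (n : ℕ) : cubeMeasure (m + 1) {α | n ≠ 0 ∧ ∏ i, nid (n * α i) < ε n} ≤
      ENNReal.ofReal (C * (1 / (n * (logMax n * ψ ⌈Real.log (logMax n)⌉₊)))) := by
    rcases eq_or_ne n 0 with rfl | hn
    · simp
    have hn0 : (0 : ℝ) < n := by positivity
    have hℓ := one_le_logMax n
    have hℓ0 := logMax_pos n
    have hψn := hψpos ⌈Real.log (logMax n)⌉₊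
    have hlogψ : Real.log (ψ ⌈Real.log (logMax n)⌉₊) ≤ Real.log (logMax n) + 1 := by
      calc _ ≤ Real.log (Real.exp ⌈Real.log (logMax n)⌉₊) :=
            Real.log_le_log hψn (min_le_right _ _)
        _ ≤ _ := by
          rw [Real.log_exp]
          exact (Nat.ceil_lt_add_one (Real.log_nonneg hℓ)).le
    have hlogε : -Real.log (ε n) ≤ (m + 4) * logMax n := by
      have h1 : Real.log (logMax n) ≤ logMax n := Real.log_le_self hℓ0.le
      have h2 := log_le_logMax n
      simp only [hε]
      rw [one_div, Real.log_inv, neg_neg, Real.log_mul (by positivity) (by positivity),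
        Real.log_mul (by positivity) (by positivity), Real.log_pow]
      push_cast
      have : (0 : ℝ) ≤ m := m.cast_nonneg
      nlinarith
    have hL : 1 < (m + 4) * logMax n := by
      have : (0 : ℝ) ≤ m := m.cast_nonneg
      nlinarith
    have := cubeMeasure_prod_nid_lt_le (m := m) hn (ε := ε n) (by positivity) hL hlogε
    refine (measure_mono fun α hα => hα.2).trans (this.trans_eq ?_)
    congr 1
    simp only [hε, hC, ← mul_assoc _ _ (logMax n), mul_pow _ (logMax n), pow_succ]
    field_simp
  have hBC := ae_eventually_notMem (μ := cubeMeasure (m + 1))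
    (s := fun n : ℕ => {α | n ≠ 0 ∧ ∏ i, nid (n * α i) < ε n})
    (ne_top_of_le_ne_top (hS.mul_left C).tsum_ofReal_ne_top (ENNReal.tsum_le_tsum hbound))
  filter_upwards [hBC] with α hα
  filter_upwards [hα, Filter.eventually_ge_atTop 3] with n hn hn3
  have hn0 : n ≠ 0 := by lia
  have hn0' : (0 : ℝ) < n := by positivity
  simp only [not_and, not_lt] at hn
  have hlog := logMax_pos n
  have h := hn hn0
  simp only [hε] at h
  rw [logMax_eq_log hn3] at h hlog
  calc _ ≤ 1 / (Real.log n ^ (m + 1) * ψ ⌈Real.log (Real.log n)⌉₊) := by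
        have := hψpos ⌈Real.log (Real.log n)⌉₊
        have : ψ ⌈Real.log (Real.log n)⌉₊ ≤ φ ⌈Real.log (Real.log n)⌉₊ := min_le_left _ _
        gcongr
    _ = n * (1 / (n * (Real.log n ^ (m + 1) * ψ ⌈Real.log (Real.log n)⌉₊))) := by
        field_simp
    _ ≤ _ := by gcongr

lemma cubeMeasure_nid_lt_le {d n : ℕ} (hn : n ≠ 0) (i : Fin d) {t : ℝ} (ht : 0 < t) :
    cubeMeasure d {α | nid (n * α i) < t} ≤ ENNReal.ofReal (2 * t) := by
  have hm : MeasurableSet {x : ℝ | nid (n * x) < t} :=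
    measurableSet_lt (measurable_nid.comp (measurable_const_mul _)) measurable_const
  have h := (measurePreserving_eval (fun _ : Fin d => (volume : Measure ℝ).restrict
    (Set.Icc 0 1)) i).measure_preimage hm.nullMeasurableSet
  refine (h.trans_le ?_)
  have h2 := measure_nid_mul_lt hn (ENNReal.ofReal t)
  rw [ENNReal.ofReal_mul (by norm_num), ENNReal.ofReal_ofNat]
  simpa only [ENNReal.ofReal_lt_ofReal_iff ht] using h2

lemma ae_nid_pos (d : ℕ) :
    ∀ᵐ α ∂(cubeMeasure d), ∀ n : ℕ, n ≠ 0 → ∀ i, 0 < nid (n * α i) := by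
  rw [ae_all_iff]
  intro n
  rcases eq_or_ne n 0 with rfl | hn
  · simp
  simp only [ne_eq, hn, not_false_eq_true, forall_const]
  rw [ae_all_iff]
  intro i
  rw [ae_iff, ← nonpos_iff_eq_zero]
  refine ENNReal.le_of_forall_pos_le_add fun δ hδ _ => ?_
  have hδ' : (0 : ℝ) < δ := hδ
  rw [zero_add]
  refine (measure_mono fun α hα => ?_).trans
    ((cubeMeasure_nid_lt_le hn i (half_pos hδ')).trans_eq ?_)
  · exact (not_lt.1 hα).trans_lt (half_pos hδ')
  · rw [mul_div_cancel₀ _ two_ne_zero, ENNReal.ofReal_coe_nnreal]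

lemma ae_eventually_nid_ge {d : ℕ} {φ : ℕ → ℝ} (hpos : ∀ n, 0 < φ n) (hmono : Monotone φ)
    (hsum : Summable fun n => 1 / φ n) (i : Fin d) :
    ∀ᵐ α ∂(cubeMeasure d), ∀ᶠ n : ℕ in Filter.atTop,
      1 / (n * φ ⌈Real.log n⌉₊) ≤ nid (n * α i) := by
  have hS := summable_one_div_mul_comp_log hpos hmono hsum
  have hBC := ae_eventually_notMem (μ := cubeMeasure d)
    (s := fun n : ℕ => {α | n ≠ 0 ∧ nid (n * α i) < 1 / (n * φ ⌈Real.log n⌉₊)})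
    (ne_top_of_le_ne_top (hS.mul_left 2).tsum_ofReal_ne_top (ENNReal.tsum_le_tsum fun n => by
      rcases eq_or_ne n 0 with rfl | hn
      · simp
      have := hpos ⌈Real.log n⌉₊
      exact (measure_mono fun α hα => hα.2).trans
        (cubeMeasure_nid_lt_le hn i (by positivity))))
  filter_upwards [hBC] with α hα
  filter_upwards [hα, Filter.eventually_ne_atTop 0] with n hn hn0
  simpa [hn0] using hn

/-- An eventual inequality between sequences that are positive from `k` on holds from `k` on after
scaling by a suitable positive constant. -/
lemma exists_pos_forall_mul_le {a b : ℕ → ℝ} {k : ℕ} (ha : ∀ n, k ≤ n → 0 < a n)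
    (hb : ∀ n, k ≤ n → 0 < b n) (h : ∀ᶠ n in Filter.atTop, b n ≤ a n) :
    ∃ c : ℝ, 0 < c ∧ ∀ n, k ≤ n → c * b n ≤ a n := by
  obtain ⟨N, hN⟩ := Filter.eventually_atTop.1 h
  have hfin : ∃ c : ℝ, 0 < c ∧ ∀ n ∈ Finset.Ico k N, c ≤ a n / b n := by
    refine ((Filter.eventually_all_finset (l := nhdsWithin (0 : ℝ) (Set.Ioi 0)) _).2
      fun n hn => ?_).and self_mem_nhdsWithin |>.exists.imp fun c hc => ⟨hc.2, hc.1⟩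
    have hk := (Finset.mem_Ico.1 hn).1
    exact nhdsWithin_le_nhds (Iic_mem_nhds (div_pos (ha n hk) (hb n hk)))
  obtain ⟨c, hc, hcle⟩ := hfin
  refine ⟨min c 1, lt_min hc one_pos, fun n hn => ?_⟩
  have hbn := hb n hn
  rcases lt_or_ge n N with hlt | hge
  · exact (le_div_iff₀ hbn).1 ((min_le_left _ _).trans (hcle n (Finset.mem_Ico.2 ⟨hn, hlt⟩)))
  · calc _ ≤ 1 * b n := by gcongr; exact min_le_right _ _
      _ ≤ _ := by rw [one_mul]; exact hN n hge

/-- Lower bound for the small divisors: for a.e. `α ∈ [0,1]^d` there is `c(α,φ) > 0`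
such that for every `|n| > 1`,
`|n|·∏‖nα_i‖ ≥ c/((log|n|)^d·φ(⌈log log|n|⌉))` and
`‖nα_i‖ ≥ c/(|n|·φ(⌈log|n|⌉))` for every `i`. -/
theorem stmt_11 (d : ℕ) (hd : 1 ≤ d) (φ : ℕ → ℝ) (hφpos : ∀ n, 0 < φ n)
    (hφmono : Monotone φ) (hφsum : Summable fun n => 1 / φ n) :
    ∀ᵐ α ∂((volume : Measure (Fin d → ℝ)).restrict
        (Set.univ.pi fun _ : Fin d => Set.Icc (0 : ℝ) 1)),
      ∃ c : ℝ, 0 < c ∧ ∀ n : ℤ, 1 < |n| →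
        (c / (Real.log |(n : ℝ)| ^ d * φ (Nat.ceil (Real.log (Real.log |(n : ℝ)|)))) ≤
            |(n : ℝ)| * ∏ i : Fin d, nid ((n : ℝ) * α i)) ∧
        ∀ i : Fin d,
          c / (|(n : ℝ)| * φ (Nat.ceil (Real.log |(n : ℝ)|))) ≤ nid ((n : ℝ) * α i) := by
  obtain ⟨m, rfl⟩ := Nat.exists_eq_add_of_le' hd
  rw [volume_pi, Measure.restrict_pi_pi]
  filter_upwards [ae_nid_pos (m + 1), ae_eventually_prod_nid_ge hφpos hφmono hφsum,
    ae_all_iff.2 (ae_eventually_nid_ge hφpos hφmono hφsum)] with α hαpos hαprod hαcoord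
  have hlog (n : ℕ) (hn : 2 ≤ n) : 0 < Real.log n := Real.log_pos (by exact_mod_cast hn)
  have hcast (n : ℕ) (hn : 2 ≤ n) : (0 : ℝ) < n := by exact_mod_cast (by lia : 0 < n)
  obtain ⟨c, hc, hcle⟩ := exists_pos_forall_mul_le (k := 2)
    (fun n hn => mul_pos (hcast n hn)
      (Finset.prod_pos fun i _ => hαpos n (by lia) i))
    (fun n hn => one_div_pos.2 (mul_pos (pow_pos (hlog n hn) _) (hφpos _))) hαprod
  have hcoord (i : Fin (m + 1)) := exists_pos_forall_mul_le (k := 2)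
    (fun n hn => hαpos n (by lia) i)
    (fun n hn => one_div_pos.2 (mul_pos (hcast n hn) (hφpos _))) (hαcoord i)
  choose e he hele using hcoord
  obtain ⟨i₀, -, hi₀⟩ := Finset.exists_min_image Finset.univ e Finset.univ_nonempty
  refine ⟨min c (e i₀), lt_min hc (he i₀), fun n hn => ?_⟩
  have hn2 : 2 ≤ n.natAbs := by rw [Int.abs_eq_natAbs] at hn; lia
  have habs : |(n : ℝ)| = (n.natAbs : ℝ) := by rw [Nat.cast_natAbs, Int.cast_abs]
  have hnid (x : ℝ) : nid (n * x) = nid (n.natAbs * x) := by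
    rw [← habs]
    rcases abs_choice (n : ℝ) with h | h <;> rw [h]
    rw [neg_mul, nid_neg]
  simp only [habs, hnid]
  refine ⟨?_, fun i => ?_⟩
  · refine le_trans ?_ (hcle _ hn2)
    have h1 := hlog _ hn2
    have h2 := hφpos ⌈Real.log (Real.log n.natAbs)⌉₊
    rw [mul_one_div]
    gcongr
    exact min_le_left _ _
  · refine le_trans ?_ (hele i _ hn2)
    have h1 := hcast _ hn2
    have h2 := hφpos ⌈Real.log n.natAbs⌉₊
    rw [mul_one_div]
    gcongr
    exact (min_le_right _ _).trans (hi₀ i (Finset.mem_univ i))
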